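/- arXiv:1304.7301 — 2 statements merged into one kernel-verified Lean document; each statement's English description precedes it below -/
import Mathlib

section
/- Supercritical percolation of empty paths: let the initial configuration λ_0 of the '1 Or 3' cellular automaton be i.i.d. fair bits on all of ℤ. Then with positive probability there exists an infinite sequence of space-time points (x_0,0), (x_1,1), (x_2,2), … with x_0 = 0, |x_{i+1} − x_i| ≤ 1 for all i, and λ(x_i, i) = 0 for all i. -/
open MeasureTheory

/-- Configurations of the one-dimensional CA: states in `ZMod 2` indexed by `ℤ`. -/
abbrev Config := ℤ → ZMod 2

/-- One step of the `1 Or 3` rule. -/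
def step (f : Config) : Config := fun x => f (x - 1) + f x + f (x + 1)

/-- Evolution of the `1 Or 3` rule. -/
def evol (f : Config) (t : ℕ) : Config := step^[t] f

/-- Single `1` at the origin. -/
def single : Config := fun x => if x = 0 then 1 else 0

/-- The random variables `X x`, `x ∈ K`, are i.i.d. fair bits under `μ`:
every finite cylinder event indexed inside `K` has the product probability. -/
def IIDFairOn {Ω : Type*} [MeasurableSpace Ω] (μ : Measure Ω)
    (X : Ω → Config) (K : Set ℤ) : Prop :=
  ∀ S : Finset ℤ, ↑S ⊆ K → ∀ v : ℤ → ZMod 2,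
    μ {ω | ∀ x ∈ S, X ω x = v x} = (2 : ENNReal)⁻¹ ^ S.card

/-!
From an empty site at time `n`, trace its rightmost ancestral line: from an empty site of `step f`
move to the first empty site of `f` among its right neighbor, itself and its left neighbor. As the
kernel of `step` acts simply transitively on the bits of two adjacent sites, those of `f` are fair
given `step f`, so going back in time the line performs a random walk whose jumps `1, 0, -1` have
probabilities `1/2, 1/4, 1/4`. It drifts to the right, and by symmetry the leftmost line drifts to
the left. Hence, almost surely, the time-`0` ends of these lines from the first empty nonnegative
site at time `n` stay bounded below and above respectively as `n` varies. An empty path caught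
between the two lines can always be prolonged, so some site in a fixed interval starts empty paths
of every length. By shift invariance the origin does so with positive probability, and König's
lemma turns arbitrarily long paths into an infinite one.
-/

namespace OneOrThree

/-! ### The rule and its kernel -/

lemma evol_succ (f : Config) (n : ℕ) : evol f (n + 1) = evol (step f) n :=
  rfl

lemma evol_succ' (f : Config) (n : ℕ) : evol f (n + 1) = step (evol f n) :=
  Function.iterate_succ_apply' step n f

lemma step_apply_unit (d : ℤˣ) (f : Config) (x : ℤ) :
    step f x = f (x + d) + f x + f (x - d) := by
  rcases Int.units_eq_one_or d with rfl | rfl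
  · simp only [step, Units.val_one]
    ring
  · simp [step, ← sub_eq_add_neg]

lemma step_comp_add_right (f : Config) (a : ℤ) :
    step (fun x => f (x + a)) = fun x => step f (x + a) := by
  funext x
  simp only [step, sub_add_eq_add_sub, add_right_comm]

/-- The `1 Or 3` rule as an endomorphism of the compact group `Config`. -/
def stepHom : Config →+ Config where
  toFun := step
  map_zero' := by
    funext x
    simp [step]
  map_add' f g := by
    funext x
    simp only [step, Pi.add_apply]
    ring

lemma continuous_step : Continuous step := by
  unfold step
  fun_prop

lemma exists_orbit {α : Type*} (e : ℤ → Equiv.Perm α) (a : α) :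
    ∃ p : ℤ → α, ∀ n, p (n + 1) = e n (p n) := by
  let forward : ℕ → α := Nat.rec a fun n => e n
  let backward : ℕ → α := Nat.rec a fun n => (e (-(n + 1 : ℕ))).symm
  let p : ℤ → α
    | .ofNat n => forward n
    | .negSucc n => backward (n + 1)
  refine ⟨p, fun n => ?_⟩
  rcases n with n | _ | n
  · rfl
  · exact ((e (-1)).apply_symm_apply a).symm
  · exact ((e (-(n + 2 : ℕ))).apply_symm_apply (backward (n + 1))).symm

/-- A preimage is determined by two adjacent bits, from which the rule can be solved in both
directions. -/
lemma step_surjective : Function.Surjective step := by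
  intro g
  let solve (x : ℤ) : Equiv.Perm (ZMod 2 × ZMod 2) :=
    { toFun := fun q => (q.2, g x - q.1 - q.2)
      invFun := fun q => (g x - q.1 - q.2, q.1)
      left_inv := fun q => by ext <;> simp
      right_inv := fun q => by ext <;> simp [sub_right_comm] }
  obtain ⟨p, hp⟩ := exists_orbit solve 0
  have snd_succ (x : ℤ) : (p (x + 1)).2 = g x - (p x).1 - (p x).2 :=
    congrArg Prod.snd (hp x)
  have fst_eq (x : ℤ) : (p x).1 = (p (x - 1)).2 := by
    simpa [solve] using congrArg Prod.fst (hp (x - 1))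
  refine ⟨fun x => (p x).2, funext fun x => ?_⟩
  simp only [step, snd_succ, fst_eq]
  ring

/-- The four configurations killed by `step`, parametrized by their bits at `0` and `1`: they have
period three and the bits of a period add up to zero. -/
def kernelConfig (p : ZMod 2 × ZMod 2) : Config := fun x =>
  if (x : ZMod 3) = 0 then p.1 else if (x : ZMod 3) = 1 then p.2 else p.1 + p.2

lemma step_kernelConfig (p : ZMod 2 × ZMod 2) : step (kernelConfig p) = 0 := by
  funext x
  simp only [step, kernelConfig, Pi.zero_apply, Int.cast_sub, Int.cast_add, Int.cast_one]
  generalize (x : ZMod 3) = r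
  revert p r
  decide

lemma bijective_kernelConfig_bits (d : ℤˣ) (x : ℤ) :
    Function.Bijective fun p => (kernelConfig p (x + d), kernelConfig p x) := by
  simp only [kernelConfig, Int.cast_add]
  generalize (x : ZMod 3) = r
  rcases Int.units_eq_one_or d with rfl | rfl
  · simp only [Units.val_one, Int.cast_one]
    revert r
    decide
  · simp only [Units.val_neg, Units.val_one, Int.cast_neg, Int.cast_one]
    revert r
    decide

/-! ### Empty paths and their extremal ancestral lines -/

/-- Some empty path with `n` vertices starts at the space-time point `(x, 0)`. The recursion is on
the first step of the path; for `n = 0` there is no vertex and hence no condition. -/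
def Survives : Config → ℤ → ℕ → Prop
  | _, _, 0 => True
  | f, x, n + 1 => f x = 0 ∧ ∃ y : ℤ, |y - x| ≤ 1 ∧ Survives (step f) y n

lemma Survives.of_succ {f : Config} {x : ℤ} {n : ℕ} (h : Survives f x (n + 1)) :
    Survives f x n := by
  induction n generalizing f x with
  | zero => trivial
  | succ n ih =>
    obtain ⟨hx, y, hy, hn⟩ := h
    exact ⟨hx, y, hy, ih hn⟩

lemma Survives.antitone (f : Config) (x : ℤ) : Antitone (Survives f x) :=
  antitone_nat_of_succ_le fun _ => Survives.of_succ

lemma Survives.comp_add_right {f : Config} {x a : ℤ} {n : ℕ} (h : Survives f (x + a) n) :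
    Survives (fun y => f (y + a)) x n := by
  induction n generalizing f x with
  | zero => trivial
  | succ n ih =>
    obtain ⟨hx, y, hy, hn⟩ := h
    refine ⟨hx, y - a, by rwa [sub_sub, add_comm a x], ?_⟩
    rw [step_comp_add_right]
    exact ih (by rwa [sub_add_cancel])

lemma exists_mem_forall_of_antitone {α : Type*} {P : α → ℕ → Prop} (hP : ∀ x, Antitone (P x))
    {s : Set α} (hs : s.Finite) (h : ∀ n, ∃ x ∈ s, P x n) : ∃ x ∈ s, ∀ n, P x n := by
  by_contra! hfail
  have eventually_fail : ∀ x ∈ s, ∀ᶠ n in Filter.atTop, ¬ P x n := by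
    intro x hx
    obtain ⟨m, hm⟩ := hfail x hx
    filter_upwards [Filter.eventually_ge_atTop m] with n hmn hn
    exact hm (hP x hmn hn)
  obtain ⟨n, hn⟩ := ((Filter.eventually_all_finite hs).2 eventually_fail).exists
  obtain ⟨x, hx, hxn⟩ := h n
  exact hn x hx hxn

lemma exists_neighbor_forall_survives {f : Config} {x : ℤ} (h : ∀ n, Survives f x n) :
    ∃ y : ℤ, |y - x| ≤ 1 ∧ ∀ n, Survives (step f) y n := by
  refine exists_mem_forall_of_antitone (Survives.antitone (step f))
    (s := {y : ℤ | |y - x| ≤ 1}) ?_ fun n => (h (n + 1)).2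
  refine (Set.finite_Icc (x - 1) (x + 1)).subset fun y hy => ?_
  rw [Set.mem_ofPred_eq, abs_le] at hy
  exact ⟨by omega, by omega⟩

theorem exists_infinite_path {f : Config} {x : ℤ} (h : ∀ n, Survives f x n) :
    ∃ π : ℕ → ℤ, π 0 = x ∧ (∀ i, |π (i + 1) - π i| ≤ 1) ∧ ∀ i, evol f i (π i) = 0 := by
  have extend (i : ℕ) (y : ℤ) (hy : ∀ n, Survives (evol f i) y n) :
      ∃ z : ℤ, |z - y| ≤ 1 ∧ ∀ n, Survives (evol f (i + 1)) z n := by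
    rw [evol_succ']
    exact exists_neighbor_forall_survives hy
  choose! next next_near next_survives using extend
  let π : ℕ → ℤ := Nat.rec x next
  have π_survives (i : ℕ) : ∀ n, Survives (evol f i) (π i) n := by
    induction i with
    | zero => exact h
    | succ i ih => exact next_survives i (π i) ih
  exact ⟨π, rfl, fun i => next_near i (π i) (π_survives i), fun i => (π_survives i 1).1⟩

/-- The displacement from a site to its parent in the preferred direction, given the bits of the
preferred neighbor and of the site itself. -/
def jump (p : ZMod 2 × ZMod 2) : ℤ := if p.1 = 0 then 1 else if p.2 = 0 then 0 else -1

/-- The parent of the site `x` of `step f`: the first empty site of `f` among `x + d`, `x`, `x - d`,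
which exists if `step f x = 0`. -/
def parent (d : ℤˣ) (f : Config) (x : ℤ) : ℤ := x + d * jump (f (x + d), f x)

/-- The time-`0` site of the ancestral line of the space-time point `(z, n)`, extremal in
direction `d`: rightmost for `d = 1`, leftmost for `d = -1`. -/
def ancestor (d : ℤˣ) : Config → ℕ → ℤ → ℤ
  | _, 0, z => z
  | f, n + 1, z => parent d f (ancestor d (step f) n z)

lemma abs_parent_sub_le (d : ℤˣ) (f : Config) (x : ℤ) : |parent d f x - x| ≤ 1 := by
  rw [parent, add_sub_cancel_left, abs_mul, Int.isUnit_iff_abs_eq.1 d.isUnit, one_mul, jump]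
  split_ifs <;> simp

lemma apply_parent {d : ℤˣ} {f : Config} {x : ℤ} (hx : step f x = 0) :
    f (parent d f x) = 0 := by
  have third_eq_zero : ∀ a b c : ZMod 2, a ≠ 0 → b ≠ 0 → a + b + c = 0 → c = 0 := by decide
  rw [step_apply_unit d] at hx
  simp only [parent, jump]
  split_ifs with hfwd hmid
  · simpa using hfwd
  · simpa using hmid
  · simpa [← sub_eq_add_neg] using third_eq_zero _ _ _ hfwd hmid hx

lemma survives_ancestor {d : ℤˣ} {f : Config} {n : ℕ} {z : ℤ} (hz : evol f n z = 0) :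
    Survives f (ancestor d f n z) (n + 1) := by
  induction n generalizing f with
  | zero => exact ⟨hz, z, by simp [ancestor], trivial⟩
  | succ n ih =>
    have hn := ih hz
    refine ⟨apply_parent hn.1, ancestor d (step f) n z, ?_, hn⟩
    rw [abs_sub_comm]
    exact abs_parent_sub_le d f _

/-- An empty path that starts between the two extremal ancestral lines either stays between them,
and then ends at their common point `(z, n)`, or meets one of them, which it can follow. -/
lemma Survives.succ_of_between {f : Config} {n : ℕ} {x z : ℤ} (hx : Survives f x n)
    (hz : evol f n z = 0) (hleft : ancestor (-1) f n z ≤ x) (hright : x ≤ ancestor 1 f n z) :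
    Survives f x (n + 1) := by
  induction n generalizing f x with
  | zero =>
    obtain rfl : z = x := le_antisymm hleft hright
    exact ⟨hz, z, by simp, trivial⟩
  | succ n ih =>
    obtain ⟨hx0, y, hyx, hy⟩ := hx
    have left_near := abs_le.1 (abs_parent_sub_le (-1) f (ancestor (-1) (step f) n z))
    have right_near := abs_le.1 (abs_parent_sub_le 1 f (ancestor 1 (step f) n z))
    have y_near := abs_le.1 hyx
    rw [ancestor] at hleft hright
    refine ⟨hx0, ?_⟩
    by_cases hyleft : ancestor (-1) (step f) n z ≤ y
    · by_cases hyright : y ≤ ancestor 1 (step f) n z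
      · exact ⟨y, hyx, ih hy hz hyleft hyright⟩
      · exact ⟨_, abs_le.2 ⟨by omega, by omega⟩, survives_ancestor (d := 1) hz⟩
    · exact ⟨_, abs_le.2 ⟨by omega, by omega⟩, survives_ancestor (d := -1) hz⟩

theorem exists_forall_survives {f : Config} {z : ℕ → ℤ} (hz : ∀ n, evol f n (z n) = 0)
    (hbdd : ∀ d : ℤˣ, BddBelow (Set.range fun n => d * ancestor d f n (z n))) :
    ∃ x, ∀ n, Survives f x n := by
  obtain ⟨a, ha⟩ := hbdd 1
  obtain ⟨b, hb⟩ := hbdd (-1)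
  have right_ge (n : ℕ) : a ≤ ancestor 1 f n (z n) := by
    simpa using ha (Set.mem_range_self n)
  have left_le (n : ℕ) : ancestor (-1) f n (z n) ≤ -b := by
    simpa [le_neg] using hb (Set.mem_range_self n)
  suffices ∀ n, ∃ x ∈ Set.Icc a (-b), Survives f x n by
    obtain ⟨x, -, hx⟩ :=
      exists_mem_forall_of_antitone (Survives.antitone f) (Set.finite_Icc a (-b)) this
    exact ⟨x, hx⟩
  intro n
  induction n with
  | zero => exact ⟨z 0, ⟨right_ge 0, left_le 0⟩, trivial⟩
  | succ n ih =>
    by_cases hleft : a ≤ ancestor (-1) f n (z n)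
    · exact ⟨_, ⟨hleft, left_le n⟩, survives_ancestor (hz n)⟩
    by_cases hright : ancestor 1 f n (z n) ≤ -b
    · exact ⟨_, ⟨right_ge n, hright⟩, survives_ancestor (hz n)⟩
    obtain ⟨x, hx, hxn⟩ := ih
    obtain ⟨hax, hxb⟩ := hx
    exact ⟨x, ⟨hax, hxb⟩, hxn.succ_of_between (hz n) (by omega) (by omega)⟩

/-! ### Invariance of the law of fair bits -/

section CylinderMeasures

variable {ι α : Type*} [MeasurableSpace α] [MeasurableSingletonClass α]

lemma measurableSet_cylinder_singleton (S : Finset ι) (v : ι → α) :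
    MeasurableSet {f : ι → α | ∀ x ∈ S, f x = v x} :=
  MeasurableSet.pi S.countable_toSet fun x _ => measurableSet_singleton (v x)

lemma ext_of_cylinder_singleton [Countable α] {μ ν : Measure (ι → α)} [IsFiniteMeasure ν]
    (h : ∀ (S : Finset ι) (v : ι → α),
      μ {f | ∀ x ∈ S, f x = v x} = ν {f | ∀ x ∈ S, f x = v x}) : μ = ν := by
  classical
  rcases isEmpty_or_nonempty (ι → α) with hempty | ⟨⟨v₀⟩⟩
  · exact Subsingleton.elim μ ν
  refine IsProjectiveLimit.unique (P := fun S : Finset ι => ν.map S.restrict) (fun S => ?_)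
    fun S => rfl
  refine Measure.ext_of_singleton fun v => ?_
  obtain ⟨w, rfl⟩ : ∃ w : ι → α, S.restrict w = v :=
    ⟨fun x => if hx : x ∈ S then v ⟨x, hx⟩ else v₀ x, by ext x; simp⟩
  have preimage_eq : S.restrict ⁻¹' ({S.restrict w} : Set (S → α)) =
      {f | ∀ x ∈ S, f x = w x} := by
    ext f
    simp [funext_iff]
  rw [Measure.map_apply (by fun_prop) (measurableSet_singleton _),
    Measure.map_apply (by fun_prop) (measurableSet_singleton _), preimage_eq, h]

end CylinderMeasures

lemma _root_.IIDFairOn.isProbabilityMeasure {Ω : Type*} [MeasurableSpace Ω] {μ : Measure Ω}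
    {X : Ω → Config} {K : Set ℤ} (h : IIDFairOn μ X K) : IsProbabilityMeasure μ :=
  ⟨by simpa using h ∅ (by simp) 0⟩

lemma _root_.IIDFairOn.map {Ω : Type*} [MeasurableSpace Ω] {μ : Measure Ω}
    {X : Ω → Config} {K : Set ℤ} (h : IIDFairOn μ X K) (hX : AEMeasurable X μ) :
    IIDFairOn (μ.map X) id K := by
  intro S hS v
  rw [← h S hS v]
  exact Measure.map_apply_of_aemeasurable hX (measurableSet_cylinder_singleton S v)

lemma _root_.IIDFairOn.isAddHaarMeasure {ν : Measure Config} (h : IIDFairOn ν id Set.univ) :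
    ν.IsAddHaarMeasure := by
  have := h.isProbabilityMeasure
  have : ν.IsAddLeftInvariant := by
    refine ⟨fun g => ext_of_cylinder_singleton fun S v => ?_⟩
    have preimage_eq : (g + ·) ⁻¹' {f : Config | ∀ x ∈ S, f x = v x} =
        {f | ∀ x ∈ S, f x = (v - g) x} := by
      ext f
      simp [eq_sub_iff_add_eq']
    rw [Measure.map_apply (measurable_const_add g) (measurableSet_cylinder_singleton S v),
      preimage_eq]
    exact (h S (Set.subset_univ _) (v - g)).trans (h S (Set.subset_univ _) v).symm
  exact Measure.isAddHaarMeasure_of_isCompact_nonempty_interior ν Set.univ isCompact_univ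
    (by simp) (by simp) (by simp)

section Haar

variable {ν : Measure Config} [ν.IsAddHaarMeasure]

lemma measurePreserving_step : MeasurePreserving step ν ν :=
  AddMonoidHom.measurePreserving (f := stepHom) continuous_step step_surjective rfl

lemma measurePreserving_evol (n : ℕ) : MeasurePreserving (evol · n) ν ν :=
  measurePreserving_step.iterate n

lemma measurePreserving_comp_add_right (a : ℤ) :
    MeasurePreserving (fun (f : Config) x => f (x + a)) ν ν :=
  AddMonoidHom.measurePreserving
    (f := (LinearMap.funLeft (ZMod 2) (ZMod 2) (· + a)).toAddMonoidHom)
    (continuous_pi fun x => continuous_apply (x + a))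
    (LinearMap.funLeft_surjective_of_injective (ZMod 2) (ZMod 2) _ (add_left_injective a)) rfl

end Haar

/-! ### Exponential moments of ancestral lines -/

lemma measurable_apply_of_countable {Ω ι α : Type*} [MeasurableSpace Ω] [MeasurableSpace ι]
    [MeasurableSpace α] [Countable ι] [MeasurableSingletonClass ι] {X : Ω → ι → α} {i : Ω → ι}
    (hX : Measurable X) (hi : Measurable i) : Measurable fun ω => X ω (i ω) :=
  (measurable_from_prod_countable_left fun i => measurable_pi_apply i :
    Measurable fun p : (ι → α) × ι => p.1 p.2).comp (hX.prodMk hi)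

lemma measurable_bits (d : ℤˣ) {F : Config → ℤ} (hF : Measurable F) :
    Measurable fun f : Config => (f (F f + d), f (F f)) :=
  (measurable_apply_of_countable measurable_id (hF.add_const _)).prodMk
    (measurable_apply_of_countable measurable_id hF)

lemma measurable_ancestor (d : ℤˣ) (n : ℕ) {V : Config → ℤ} (hV : Measurable V) :
    Measurable fun f => ancestor d f n (V (evol f n)) := by
  induction n with
  | zero => exact hV
  | succ n ih =>
    have hF := ih.comp continuous_step.measurable
    exact hF.add (((measurable_of_countable jump).comp (measurable_bits d hF)).const_mul _)

/-- Given `step f`, the bits of `f` at two adjacent sites determined by `step f` are independent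
and fair, because the kernel of `step` acts on them simply transitively. -/
lemma lintegral_bits {ν : Measure Config} [ν.IsAddHaarMeasure] (d : ℤˣ) {F : Config → ℤ}
    (hF : Measurable F) (Φ : ℤ → ZMod 2 × ZMod 2 → ENNReal) :
    4 * ∫⁻ f, Φ (F (step f)) (f (F (step f) + d), f (F (step f))) ∂ν =
      ∫⁻ f, ∑ p, Φ (F f) p ∂ν := by
  let G : Config → ENNReal := fun f => Φ (F (step f)) (f (F (step f) + d), f (F (step f)))
  have hF' : Measurable fun f => F (step f) := hF.comp continuous_step.measurable
  have hG : Measurable G :=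
    (measurable_of_countable (Function.uncurry Φ)).comp (hF'.prodMk (measurable_bits d hF'))
  have sum_translates (f : Config) : ∑ p, G (kernelConfig p + f) = ∑ p, Φ (F (step f)) p := by
    have step_eq (p : ZMod 2 × ZMod 2) : step (kernelConfig p + f) = step f := by
      rw [show step (kernelConfig p + f) = step (kernelConfig p) + step f from
        stepHom.map_add _ _, step_kernelConfig, zero_add]
    simp only [G, step_eq, Pi.add_apply]
    exact ((Equiv.addRight (f (F (step f) + d), f (F (step f)))).bijective.comp
      (bijective_kernelConfig_bits d (F (step f)))).sum_comp (Φ (F (step f)))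
  calc 4 * ∫⁻ f, G f ∂ν
    _ = ∑ p, ∫⁻ f, G (kernelConfig p + f) ∂ν := by
      simp [lintegral_add_left_eq_self G]
    _ = ∫⁻ f, ∑ p, G (kernelConfig p + f) ∂ν :=
      (lintegral_finsetSum _ fun p _ => hG.comp (measurable_const_add _)).symm
    _ = ∫⁻ f, ∑ p, Φ (F (step f)) p ∂ν := by simp only [sum_translates]
    _ = ∫⁻ f, ∑ p, Φ (F f) p ∂ν :=
      measurePreserving_step.lintegral_comp
        (Finset.measurable_sum _ fun p _ => (measurable_of_countable (Φ · p)).comp hF)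

/-- The mean of `b ^ (-jump)` over two independent fair bits. -/
noncomputable def driftFactor (b : ENNReal) : ENNReal := 4⁻¹ * ∑ p, b ^ (-jump p)

lemma driftFactor_eq (b : ENNReal) : driftFactor b = 4⁻¹ * (b⁻¹ + b⁻¹ + 1 + b) := by
  have univ_eq : (Finset.univ : Finset (ZMod 2 × ZMod 2)) = {(0, 0), (0, 1), (1, 0), (1, 1)} := by
    decide
  simp [driftFactor, univ_eq, jump, add_assoc, ← zpow_neg_one]

/-- Clearing denominators leaves `(b - 1) * (b - 2) < 0`. -/
lemma driftFactor_lt_one {b : ENNReal} (hb₁ : 1 < b) (hb₂ : b < 2) : driftFactor b < 1 := by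
  lift b to NNReal using hb₂.ne_top
  norm_cast at hb₁ hb₂
  have four_inv : (4 : ENNReal)⁻¹ = (4⁻¹ : NNReal) := by norm_num
  rw [driftFactor_eq, ← ENNReal.coe_inv (zero_lt_one.trans hb₁).ne', four_inv]
  norm_cast
  rw [← NNReal.coe_lt_coe] at hb₁ hb₂ ⊢
  push_cast at hb₁ hb₂ ⊢
  have : (0 : ℝ) < b := by linarith
  field_simp
  nlinarith

lemma lintegral_zpow_parent {ν : Measure Config} [ν.IsAddHaarMeasure] (d : ℤˣ) {b : ENNReal}
    (hb₀ : b ≠ 0) (hb : b ≠ ⊤) {F : Config → ℤ} (hF : Measurable F) :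
    ∫⁻ f, b ^ (-(d * parent d f (F (step f)))) ∂ν =
      driftFactor b * ∫⁻ f, b ^ (-(d * F f)) ∂ν := by
  have zpow_parent (f : Config) (x : ℤ) : b ^ (-(d * parent d f x)) =
      b ^ (-(d * x)) * b ^ (-jump (f (x + d), f x)) := by
    rw [← ENNReal.zpow_add hb₀ hb, parent, mul_add, ← mul_assoc, Int.units_coe_mul_self, one_mul,
      neg_add]
  simp only [zpow_parent]
  rw [← ENNReal.mul_right_inj (a := 4) (by norm_num) (by norm_num),
    lintegral_bits d hF fun x p => b ^ (-(d * x)) * b ^ (-jump p)]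
  have hmeas : Measurable fun f => b ^ (-(d * F f)) :=
    (measurable_of_countable fun x : ℤ => b ^ (-(d * x))).comp hF
  simp only [← Finset.mul_sum]
  rw [lintegral_mul_const _ hmeas, driftFactor, ← mul_assoc, ← mul_assoc,
    ENNReal.mul_inv_cancel (by norm_num) (by norm_num), one_mul, mul_comm]

lemma lintegral_zpow_ancestor {ν : Measure Config} [ν.IsAddHaarMeasure] (d : ℤˣ) {b : ENNReal}
    (hb₀ : b ≠ 0) (hb : b ≠ ⊤) {V : Config → ℤ} (hV : Measurable V) (n : ℕ) :
    ∫⁻ f, b ^ (-(d * ancestor d f n (V (evol f n)))) ∂ν =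
      driftFactor b ^ n * ∫⁻ f, b ^ (-(d * V f)) ∂ν := by
  induction n with
  | zero => simp [ancestor, evol]
  | succ n ih =>
    simp only [evol_succ, ancestor]
    rw [lintegral_zpow_parent d hb₀ hb (measurable_ancestor d n hV), ih, pow_succ', mul_assoc]

lemma bddBelow_range_of_tsum_zpow_neg_ne_top {ι : Type*} {b : ENNReal} (hb : 1 < b) {u : ι → ℤ}
    (hsum : ∑' i, b ^ (-u i) ≠ ⊤) : BddBelow (Set.range u) := by
  obtain ⟨N, hN⟩ : ∃ N : ℕ, ∑' i, b ^ (-u i) < b ^ N :=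
    ((ENNReal.tendsto_pow_atTop_nhds_top_iff.2 hb).eventually_const_lt hsum.lt_top).exists
  refine ⟨-N, Set.forall_mem_range.2 fun i => ?_⟩
  by_contra! hi
  refine (hN.trans_le ?_).not_ge (ENNReal.le_tsum i)
  rw [← zpow_natCast]
  exact ENNReal.zpow_le_of_le hb.le (by omega)

theorem ae_bddBelow_ancestor {ν : Measure Config} [ν.IsAddHaarMeasure] (d : ℤˣ) {b : ENNReal}
    (hb₁ : 1 < b) (hb₂ : b < 2) {V : Config → ℤ} (hV : Measurable V)
    (hmoment : ∫⁻ f, b ^ (-(d * V f)) ∂ν ≠ ⊤) :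
    ∀ᵐ f ∂ν, BddBelow (Set.range fun n => d * ancestor d f n (V (evol f n))) := by
  have hmeas (n : ℕ) : Measurable fun f => b ^ (-(d * ancestor d f n (V (evol f n)))) :=
    (measurable_of_countable fun x : ℤ => b ^ (-(d * x))).comp (measurable_ancestor d n hV)
  have total_ne_top : ∫⁻ f, ∑' n, b ^ (-(d * ancestor d f n (V (evol f n)))) ∂ν ≠ ⊤ := by
    rw [lintegral_tsum fun n => (hmeas n).aemeasurable]
    simp only [lintegral_zpow_ancestor d (zero_lt_one.trans hb₁).ne' hb₂.ne_top hV]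
    rw [ENNReal.tsum_mul_right, ENNReal.tsum_geometric]
    exact ENNReal.mul_ne_top
      (ENNReal.inv_ne_top.2 (tsub_pos_of_lt (driftFactor_lt_one hb₁ hb₂)).ne') hmoment
  filter_upwards [ae_lt_top (Measurable.tsum hmeas) total_ne_top] with f hf
  exact bddBelow_range_of_tsum_zpow_neg_ne_top hb₁ hf.ne

/-! ### The first empty site -/

/-- The first empty site of `f` on the nonnegative half-line, with junk value `0` if there is
none. It is the endpoint at time `n` of the ancestral lines when `f` is the state at time `n`. -/
noncomputable def firstEmpty (f : Config) : ℕ := sInf {k : ℕ | f k = 0}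

lemma apply_firstEmpty {f : Config} (h : ∃ k : ℕ, f k = 0) : f (firstEmpty f) = 0 :=
  Nat.sInf_mem h

lemma apply_ne_zero_of_lt_firstEmpty {f : Config} {j : ℕ} (h : j < firstEmpty f) : f j ≠ 0 :=
  Nat.notMem_of_lt_sInf h

lemma lt_firstEmpty_iff {f : Config} {k : ℕ} :
    k < firstEmpty f ↔ (∃ j : ℕ, f j = 0) ∧ ∀ j : ℕ, j ≤ k → f j ≠ 0 := by
  refine ⟨fun hk => ⟨Nat.nonempty_of_pos_sInf (Nat.zero_lt_of_lt hk), fun j hj =>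
    apply_ne_zero_of_lt_firstEmpty (hj.trans_lt hk)⟩, fun ⟨hex, hk⟩ => ?_⟩
  by_contra! hle
  exact hk _ hle (apply_firstEmpty hex)

lemma measurable_firstEmpty : Measurable firstEmpty := by
  have hzero (k : ℕ) : MeasurableSet {f : Config | f k = 0} :=
    measurable_pi_apply (k : ℤ) (measurableSet_singleton 0)
  refine measurable_of_Ioi fun k => ?_
  simp only [Set.preimage, Set.mem_Ioi, lt_firstEmpty_iff]
  measurability

lemma _root_.IIDFairOn.measure_forall_lt_apply_ne_zero {ν : Measure Config}
    (h : IIDFairOn ν id Set.univ) (k : ℕ) :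
    ν {f | ∀ j : ℕ, j < k → f j ≠ 0} = 2⁻¹ ^ k := by
  have ne_zero_iff : ∀ a : ZMod 2, a ≠ 0 ↔ a = 1 := by decide
  simpa [ne_zero_iff] using h ((Finset.range k).map Nat.castEmbedding) (Set.subset_univ _) 1

lemma _root_.IIDFairOn.ae_exists_apply_eq_zero {ν : Measure Config}
    (h : IIDFairOn ν id Set.univ) : ∀ᵐ f ∂ν, ∃ k : ℕ, f k = 0 := by
  have measure_le (k : ℕ) : ν {f | ¬ ∃ j : ℕ, f j = 0} ≤ 2⁻¹ ^ k := by
    rw [← h.measure_forall_lt_apply_ne_zero k]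
    exact measure_mono fun f hf j _ hj => hf ⟨j, hj⟩
  exact le_antisymm (ge_of_tendsto' (ENNReal.tendsto_pow_atTop_nhds_zero_of_lt_one
    (ENNReal.inv_lt_one.2 ENNReal.one_lt_two)) measure_le) zero_le

lemma _root_.IIDFairOn.lintegral_zpow_firstEmpty_ne_top {ν : Measure Config}
    (h : IIDFairOn ν id Set.univ) (d : ℤˣ) {b : ENNReal} (hb₁ : 1 ≤ b) (hb₂ : b < 2) :
    ∫⁻ f, b ^ (-(d * firstEmpty f) : ℤ) ∂ν ≠ ⊤ := by
  have ratio_lt_one : b * 2⁻¹ < 1 := by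
    rw [← div_eq_mul_inv]
    exact ENNReal.div_lt_of_lt_mul' (by simpa using hb₂)
  have fiber_le (k : ℕ) : ν (firstEmpty ⁻¹' {k}) ≤ 2⁻¹ ^ k := by
    rw [← h.measure_forall_lt_apply_ne_zero k]
    refine measure_mono ?_
    rintro f rfl j hj
    exact apply_ne_zero_of_lt_firstEmpty hj
  refine ne_top_of_le_ne_top (ENNReal.inv_ne_top.2 (tsub_pos_of_lt ratio_lt_one).ne') ?_
  calc ∫⁻ f, b ^ (-(d * firstEmpty f) : ℤ) ∂ν
    _ ≤ ∫⁻ f, b ^ firstEmpty f ∂ν := by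
      refine lintegral_mono fun f => ?_
      rw [← zpow_natCast]
      refine ENNReal.zpow_le_of_le hb₁ ?_
      rcases Int.units_eq_one_or d with rfl | rfl <;> simp
    _ = ∑' k, b ^ k * ν (firstEmpty ⁻¹' {k}) := by
      rw [← lintegral_map (measurable_of_countable (b ^ ·)) measurable_firstEmpty,
        lintegral_countable']
      simp only [Measure.map_apply measurable_firstEmpty (measurableSet_singleton _)]
    _ ≤ ∑' k, (b * 2⁻¹) ^ k := by
      simp only [mul_pow]
      exact ENNReal.tsum_le_tsum fun k => mul_le_mul_right (fiber_le k) _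
    _ = (1 - b * 2⁻¹)⁻¹ := ENNReal.tsum_geometric _

/-! ### Survival -/

theorem _root_.IIDFairOn.ae_exists_forall_survives {ν : Measure Config}
    (h : IIDFairOn ν id Set.univ) : ∀ᵐ f ∂ν, ∃ x, ∀ n, Survives f x n := by
  have := h.isAddHaarMeasure
  obtain ⟨b, hb₁, hb₂⟩ := exists_between ENNReal.one_lt_two
  have ae_empty : ∀ᵐ f ∂ν, ∀ n, ∃ k : ℕ, evol f n k = 0 :=
    ae_all_iff.2 fun n =>
      (measurePreserving_evol n).quasiMeasurePreserving.ae h.ae_exists_apply_eq_zero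
  have measurable_start : Measurable fun f => (firstEmpty f : ℤ) :=
    (measurable_of_countable _).comp measurable_firstEmpty
  have ae_bdd : ∀ᵐ f ∂ν, ∀ d : ℤˣ,
      BddBelow (Set.range fun n => d * ancestor d f n (firstEmpty (evol f n))) :=
    ae_all_iff.2 fun d => ae_bddBelow_ancestor d hb₁ hb₂ measurable_start
      (h.lintegral_zpow_firstEmpty_ne_top d hb₁.le hb₂)
  filter_upwards [ae_empty, ae_bdd] with f hempty hbdd
  exact exists_forall_survives (fun n => apply_firstEmpty (hempty n)) hbdd

lemma measurableSet_survives (x : ℤ) (n : ℕ) : MeasurableSet {f | Survives f x n} := by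
  induction n generalizing x with
  | zero => exact MeasurableSet.univ
  | succ n ih =>
    have survives_succ_eq : {f | Survives f x (n + 1)} =
        {f | f x = 0} ∩ ⋃ y ∈ {y : ℤ | |y - x| ≤ 1}, step ⁻¹' {f | Survives f y n} := by
      ext f
      simp [Survives]
    rw [survives_succ_eq]
    exact (measurable_pi_apply x (measurableSet_singleton 0)).inter
      (.biUnion (Set.to_countable _) fun y _ => continuous_step.measurable (ih y))

lemma measurableSet_forall_survives (x : ℤ) : MeasurableSet {f | ∀ n, Survives f x n} := by
  rw [Set.ofPred_forall]
  exact .iInter (measurableSet_survives x)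

theorem _root_.IIDFairOn.measure_forall_survives_pos {ν : Measure Config}
    (h : IIDFairOn ν id Set.univ) (x : ℤ) : 0 < ν {f | ∀ n, Survives f x n} := by
  have := h.isAddHaarMeasure
  refine pos_iff_ne_zero.2 fun hnull => ?_
  have never_survives : ∀ᵐ f ∂ν, ∀ y, ¬ ∀ n, Survives f y n := by
    refine ae_all_iff.2 fun y => ?_
    have hx : ∀ᵐ f ∂ν, ¬ ∀ n, Survives f x n := by simpa [ae_iff] using hnull
    filter_upwards [(measurePreserving_comp_add_right (y - x)).quasiMeasurePreserving.ae hx]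
      with f hf hy
    exact hf fun n => Survives.comp_add_right (by simpa using hy n)
  obtain ⟨f, ⟨y, hy⟩, hf⟩ := (h.ae_exists_forall_survives.and never_survives).exists
  exact hf y hy

/-! ### Transfer to the canonical space -/

/-- The complement of a measurable hull of `Aᶜ` is contained in `A` and has the same measure. -/
lemma nullMeasurableSet_of_measure_add_measure_compl_le {Ω : Type*} [MeasurableSpace Ω]
    {μ : Measure Ω} [IsFiniteMeasure μ] {A : Set Ω} (h : μ A + μ Aᶜ ≤ μ Set.univ) :
    NullMeasurableSet A μ := by
  have compl_hull_subset : (toMeasurable μ Aᶜ)ᶜ ⊆ A :=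
    Set.compl_subset_comm.1 (subset_toMeasurable μ Aᶜ)
  have le_measure : μ A ≤ μ (toMeasurable μ Aᶜ)ᶜ := by
    rw [measure_compl (measurableSet_toMeasurable μ Aᶜ) (measure_ne_top μ _),
      measure_toMeasurable]
    exact ENNReal.le_sub_of_add_le_right (measure_ne_top μ _) h
  have hmeas := (measurableSet_toMeasurable μ Aᶜ).compl.nullMeasurableSet (μ := μ)
  exact hmeas.congr (ae_eq_of_subset_of_measure_ge compl_hull_subset le_measure hmeas
    (measure_ne_top μ _))

lemma _root_.IIDFairOn.aemeasurable_apply {Ω : Type*} [MeasurableSpace Ω] {μ : Measure Ω}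
    {X : Ω → Config} {K : Set ℤ} (h : IIDFairOn μ X K) {x : ℤ} (hx : x ∈ K) :
    AEMeasurable (fun ω => X ω x) μ := by
  have := h.isProbabilityMeasure
  have measure_fiber (a : ZMod 2) : μ {ω | X ω x = a} = 2⁻¹ := by
    simpa using h {x} (by simpa using hx) fun _ => a
  have fiber_compl (a : ZMod 2) : {ω | X ω x = a}ᶜ = {ω | X ω x = a + 1} := by
    have ne_iff : ∀ b c : ZMod 2, b ≠ c ↔ b = c + 1 := by decide
    ext ω
    exact ne_iff _ _
  have nullMeasurable_fiber (a : ZMod 2) : NullMeasurableSet {ω | X ω x = a} μ := by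
    apply nullMeasurableSet_of_measure_add_measure_compl_le
    rw [fiber_compl, measure_fiber, measure_fiber, ENNReal.inv_two_add_inv_two, measure_univ]
  refine NullMeasurable.aemeasurable fun s _ => ?_
  rw [← Set.biUnion_preimage_singleton]
  exact .biUnion s.to_countable fun a _ => nullMeasurable_fiber a

lemma _root_.IIDFairOn.aemeasurable {Ω : Type*} [MeasurableSpace Ω] {μ : Measure Ω}
    {X : Ω → Config} (h : IIDFairOn μ X Set.univ) : AEMeasurable X μ :=
  aemeasurable_pi_iff.2 fun x => h.aemeasurable_apply (Set.mem_univ x)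

end OneOrThree

theorem supercritical_empty_paths {Ω : Type*} [MeasurableSpace Ω]
    (μ : Measure Ω) [IsProbabilityMeasure μ] (init : Ω → Config)
    (hrand : IIDFairOn μ init Set.univ) :
    0 < μ {ω | ∃ π : ℕ → ℤ, π 0 = 0 ∧ (∀ i : ℕ, |π (i + 1) - π i| ≤ 1) ∧
        ∀ i : ℕ, evol (init ω) i (π i) = 0} := by
  have hinit := hrand.aemeasurable
  calc 0 < μ.map init {f | ∀ n, OneOrThree.Survives f 0 n} :=
      (hrand.map hinit).measure_forall_survives_pos 0
    _ = μ {ω | ∀ n, OneOrThree.Survives (init ω) 0 n} :=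
      Measure.map_apply_of_aemeasurable hinit (OneOrThree.measurableSet_forall_survives 0)
    _ ≤ _ := measure_mono fun _ hω => OneOrThree.exists_infinite_path hω
end

section
/- Power law for the Xor rule: let μ be the cellular automaton on {0,1}^ℤ defined by μ_{t+1}(x) = μ_t(x-1) + μ_t(x+1) mod 2, with initial configuration equal to 1 on {-1, 0} and 0 elsewhere. Define the path (x_t) by x_0 = 0 and x_{t+1} = x_t if μ_t(x_t) = 1, x_{t+1} = x_t + 1 if μ_t(x_t) = 0. Then x_t = t − Θ(t^{log 2 / log 3}) as t → ∞; that is, there exist constants 0 < c_1 ≤ c_2 and T such that c_1 t^{log 2/log 3} ≤ t − x_t ≤ c_2 t^{log 2/log 3} for all t ≥ T. -/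
open MeasureTheory

/-- One step of the Xor rule. -/
def xstep (f : Config) : Config := fun x => f (x - 1) + f (x + 1)

/-- Evolution of the Xor rule. -/
def xevol (f : Config) (t : ℕ) : Config := xstep^[t] f

/-- Indicator of `{-1, 0}`. -/
def double : Config := fun x => if x = -1 ∨ x = 0 then 1 else 0

/-!
Every zero moves the path one step to the right, so `t - x_t` counts the ones met before time `t`.
In the coordinate `d = t - x` the evolution started from `{-1, 0}` is Pascal's triangle mod 2 with
every column doubled. The path therefore descends Pascal's triangle and passes to the next column
after each pair of odd entries. Replace two by an arbitrary multiplicity `k`.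
Pascal's triangle mod 2 is self-similar: rows `2u, 2u + 1` and columns `2j, 2j + 1` carry
`C(u, j)` times the block `1 0 / 1 1`. Going through columns `2j, 2j + 1` with multiplicity `k`
thus amounts to going through column `j` with multiplicity `⌊3k / 2⌋`, at half the speed. After `n`
such renormalizations a time of order `3 ^ n` corresponds to a count of `2 ^ n * k`.
-/

lemma xevol_succ (f : Config) (t : ℕ) (x : ℤ) :
    xevol f (t + 1) x = xevol f t (x - 1) + xevol f t (x + 1) := by
  rw [xevol, Function.iterate_succ_apply']
  rfl

lemma xevol_eq_zero_of_add_lt {f : Config} {a : ℤ} (hf : ∀ x, a < x → f x = 0) (t : ℕ) {x : ℤ}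
    (hx : a + t < x) : xevol f t x = 0 := by
  induction t generalizing x with
  | zero => exact hf x (by simpa using hx)
  | succ t ih =>
    push_cast at hx
    rw [xevol_succ, ih (by omega), ih (by omega), add_zero]

lemma double_neg_natCast (d : ℕ) : double (-d) = (Nat.choose 0 (d / 2) : ZMod 2) := by
  match d with
  | 0 | 1 => simp [double]
  | d + 2 =>
    have hd : ¬(-((d + 2 : ℕ) : ℤ) = -1 ∨ -((d + 2 : ℕ) : ℤ) = 0) := by omega
    rw [double, if_neg hd]
    simp

lemma double_eq_zero_of_pos (x : ℤ) (hx : 0 < x) : double x = 0 :=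
  if_neg (by omega)

lemma xevol_double_sub (t d : ℕ) : xevol double t (t - d) = (t.choose (d / 2) : ZMod 2) := by
  induction t generalizing d with
  | zero => simpa [xevol] using double_neg_natCast d
  | succ t ih =>
    have left_parent : ((t + 1 : ℕ) : ℤ) - d - 1 = t - d := by push_cast; ring
    rw [xevol_succ, left_parent, ih]
    match d with
    | 0 | 1 =>
      rw [xevol_eq_zero_of_add_lt double_eq_zero_of_pos t (by push_cast; omega)]
      simp
    | d + 2 =>
      have right_parent : ((t + 1 : ℕ) : ℤ) - (d + 2 : ℕ) + 1 = t - d := by push_cast; ring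
      rw [right_parent, ih, Nat.add_div_right d two_pos, Nat.choose_succ_succ, Nat.cast_add,
        add_comm]

lemma odd_choose_iff (n i : ℕ) :
    Odd (n.choose i) ↔ Odd ((n % 2).choose (i % 2)) ∧ Odd ((n / 2).choose (i / 2)) := by
  have lucas : n.choose i ≡ (n % 2).choose (i % 2) * (n / 2).choose (i / 2) [MOD 2] :=
    Choose.choose_modEq_choose_mod_mul_choose_div_nat
  rw [← Nat.odd_mul, Nat.odd_iff, Nat.odd_iff, lucas]

lemma odd_choose_two_mul (u i : ℕ) :
    Odd ((2 * u).choose i) ↔ Even i ∧ Odd (u.choose (i / 2)) := by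
  rw [odd_choose_iff, Nat.mul_mod_right, Nat.mul_div_right u two_pos]
  rcases Nat.mod_two_eq_zero_or_one i with h | h <;> simp [h, Nat.even_iff]

lemma odd_choose_two_mul_add_one (u i : ℕ) :
    Odd ((2 * u + 1).choose i) ↔ Odd (u.choose (i / 2)) := by
  have hdiv : (2 * u + 1) / 2 = u := by omega
  rw [odd_choose_iff, Nat.mul_add_mod, hdiv]
  rcases Nat.mod_two_eq_zero_or_one i with h | h <;> simp [h]

/-- Reading row `t` of Pascal's triangle mod 2 in column `c / k`, where `c` is the number of ones
met so far: the path changes column after every `k` ones. -/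
def hitStep (k t c : ℕ) : ℕ := if Odd (t.choose (c / k)) then c + 1 else c

/-- The number of ones met before row `t` by the path that descends Pascal's triangle mod 2 from
its apex and passes to the next column after every `k` ones. -/
def hitCount (k : ℕ) : ℕ → ℕ
  | 0 => 0
  | t + 1 => hitStep k t (hitCount k t)

lemma hitCount_mono (k : ℕ) : Monotone (hitCount k) := by
  refine monotone_nat_of_le_succ fun t => ?_
  rw [hitCount, hitStep]
  split_ifs <;> omega

lemma hitCount_of_le {k t : ℕ} (h : t ≤ k) : hitCount k t = t := by
  induction t with
  | zero => rfl
  | succ t ih => simp [hitCount, hitStep, ih (by omega), Nat.div_eq_of_lt h]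

lemma path_eq_sub_hitCount {xs : ℕ → ℤ} (h0 : xs 0 = 0)
    (hrec : ∀ t : ℕ, xs (t + 1) = if xevol double t (xs t) = 1 then xs t else xs t + 1) (t : ℕ) :
    xs t = t - hitCount 2 t := by
  induction t with
  | zero => simp [h0, hitCount]
  | succ t ih =>
    simp only [hrec, ih, xevol_double_sub, ZMod.natCast_eq_one_iff_odd, hitCount, hitStep]
    split_ifs <;> push_cast <;> ring

/-- The number of ones met with multiplicity `k` at scale one when `c` ones have been met with
multiplicity `3 * k / 2` at scale two. Within a pair of columns, each of the first `(k + 1) / 2`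
ones of the coarse path accounts for two ones of the fine path, each of the others for one. -/
def fineCount (k c : ℕ) : ℕ :=
  2 * k * (c / (3 * k / 2)) + (c % (3 * k / 2) + min (c % (3 * k / 2)) ((k + 1) / 2))

lemma fineCount_mul_add {k : ℕ} (hk : 0 < k) (j : ℕ) {r : ℕ} (hr : r ≤ 3 * k / 2) :
    fineCount k (3 * k / 2 * j + r) = 2 * k * j + (r + min r ((k + 1) / 2)) := by
  have hpos : 0 < 3 * k / 2 := by omega
  rcases hr.lt_or_eq with hlt | rfl
  · rw [fineCount, Nat.mul_add_div hpos, Nat.mul_add_mod, Nat.div_eq_of_lt hlt,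
      Nat.mod_eq_of_lt hlt, add_zero]
  · rw [← Nat.mul_succ, fineCount, Nat.mul_div_right _ hpos, Nat.mul_mod_right, Nat.mul_succ]
    omega

lemma hitStep_two_mul {k s : ℕ} (hs : s < 2 * k) (u j : ℕ) :
    hitStep k (2 * u) (2 * k * j + s) =
      2 * k * j + if s < k ∧ Odd (u.choose j) then s + 1 else s := by
  have hk : 0 < k := by omega
  have column : (2 * k * j + s) / k = 2 * j + s / k := by
    rw [mul_comm 2 k, mul_assoc, Nat.mul_add_div hk]
  simp only [hitStep, column, odd_choose_two_mul]
  by_cases hsk : s < k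
  · simp only [Nat.div_eq_of_lt hsk, hsk, add_zero, even_two_mul, true_and,
      Nat.mul_div_right j two_pos]
    split_ifs <;> rfl
  · have right_column : s / k = 1 := Nat.div_eq_of_lt_le (by omega) (by omega)
    simp [right_column, hsk]

lemma hitStep_two_mul_add_one {k s : ℕ} (hs : s < 2 * k) (u j : ℕ) :
    hitStep k (2 * u + 1) (2 * k * j + s) =
      2 * k * j + if Odd (u.choose j) then s + 1 else s := by
  have column : (2 * k * j + s) / k / 2 = j := by
    rw [Nat.div_div_eq_div_mul, mul_comm k 2, Nat.mul_add_div (by omega), Nat.div_eq_of_lt hs,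
      add_zero]
  simp only [hitStep, odd_choose_two_mul_add_one, column]
  split_ifs <;> rfl

lemma semiconj_fineCount {k : ℕ} (hk : 0 < k) (u : ℕ) :
    Function.Semiconj (fineCount k) (hitStep (3 * k / 2) u)
      (hitStep k (2 * u + 1) ∘ hitStep k (2 * u)) := by
  intro c
  obtain ⟨j, r, hr, rfl⟩ : ∃ j r, r < 3 * k / 2 ∧ c = 3 * k / 2 * j + r :=
    ⟨_, _, Nat.mod_lt c (by omega), (Nat.div_add_mod c _).symm⟩
  have coarse_column : (3 * k / 2 * j + r) / (3 * k / 2) = j := by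
    rw [Nat.mul_add_div (by omega), Nat.div_eq_of_lt hr, add_zero]
  rw [Function.comp_apply, fineCount_mul_add hk j hr.le, hitStep_two_mul (by omega),
    hitStep_two_mul_add_one (by split_ifs <;> omega), hitStep, coarse_column]
  by_cases hodd : Odd (u.choose j)
  · simp only [hodd, if_true, and_true]
    rw [add_assoc, fineCount_mul_add hk j hr]
    split_ifs <;> omega
  · simp only [hodd, if_false, and_false, fineCount_mul_add hk j hr.le]

lemma hitCount_two_mul {k : ℕ} (hk : 0 < k) (u : ℕ) :
    hitCount k (2 * u) = fineCount k (hitCount (3 * k / 2) u) := by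
  induction u with
  | zero => simp [hitCount, fineCount]
  | succ u ih =>
    rw [Nat.mul_succ, hitCount, hitCount, ih, hitCount, (semiconj_fineCount hk u).eq,
      Function.comp_apply]

lemma hitCount_two_pow_mul {k : ℕ} (hk : 0 < k) (n : ℕ) :
    hitCount k (2 ^ n * (fun m => 3 * m / 2)^[n] k) = 2 ^ n * k := by
  induction n generalizing k with
  | zero => simp [hitCount_of_le]
  | succ n ih =>
    rw [pow_succ', mul_assoc, hitCount_two_mul hk, Function.iterate_succ_apply,
      ih (by omega), mul_comm (2 ^ n)]
    simpa [mul_right_comm] using fineCount_mul_add hk (2 ^ n) (Nat.zero_le _)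

lemma two_pow_mul_iterate_le (n k : ℕ) :
    2 ^ n * (fun m => 3 * m / 2)^[n] k ≤ 3 ^ n * k := by
  induction n generalizing k with
  | zero => simp
  | succ n ih =>
    calc 2 ^ (n + 1) * (fun m => 3 * m / 2)^[n + 1] k
        = 2 * (2 ^ n * (fun m => 3 * m / 2)^[n] (3 * k / 2)) := by
          rw [Function.iterate_succ_apply, pow_succ', mul_assoc]
      _ ≤ 2 * (3 ^ n * (3 * k / 2)) := Nat.mul_le_mul_left 2 (ih _)
      _ = 3 ^ n * (2 * (3 * k / 2)) := by ring
      _ ≤ 3 ^ n * (3 * k) := Nat.mul_le_mul_left _ (Nat.mul_div_le _ _)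
      _ = 3 ^ (n + 1) * k := by ring

lemma le_two_pow_mul_iterate (n k : ℕ) :
    3 ^ n * (k - 1) ≤ 2 ^ n * (fun m => 3 * m / 2)^[n] k := by
  induction n generalizing k with
  | zero => simp
  | succ n ih =>
    calc 3 ^ (n + 1) * (k - 1)
        = 3 ^ n * (3 * (k - 1)) := by ring
      _ ≤ 3 ^ n * (2 * (3 * k / 2 - 1)) := Nat.mul_le_mul_left _ (by omega)
      _ = 2 * (3 ^ n * (3 * k / 2 - 1)) := by ring
      _ ≤ 2 * (2 ^ n * (fun m => 3 * m / 2)^[n] (3 * k / 2)) := Nat.mul_le_mul_left 2 (ih _)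
      _ = 2 ^ (n + 1) * (fun m => 3 * m / 2)^[n + 1] k := by
          rw [Function.iterate_succ_apply, pow_succ', mul_assoc]

lemma two_pow_mul_le_hitCount {k n t : ℕ} (hk : 0 < k) (ht : 3 ^ n * k ≤ t) :
    2 ^ n * k ≤ hitCount k t := by
  rw [← hitCount_two_pow_mul hk n]
  exact hitCount_mono k ((two_pow_mul_iterate_le n k).trans ht)

lemma hitCount_le_two_pow_mul {k n t : ℕ} (hk : 0 < k) (ht : t ≤ 3 ^ n * (k - 1)) :
    hitCount k t ≤ 2 ^ n * k := by
  rw [← hitCount_two_pow_mul hk n]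
  exact hitCount_mono k (ht.trans (le_two_pow_mul_iterate n k))

lemma pow_rpow_logb {a b : ℝ} (ha : 0 < a) (hb : 0 < b) (hb' : b ≠ 1) (n : ℕ) :
    (b ^ n) ^ Real.logb b a = a ^ n := by
  rw [← Real.rpow_pow_comm hb.le, Real.rpow_logb hb hb' ha]

lemma pow_le_rpow_logb {a b x : ℝ} (ha : 1 ≤ a) (hb : 1 < b) {n : ℕ} (hx : b ^ n ≤ x) :
    a ^ n ≤ x ^ Real.logb b a := by
  rw [← pow_rpow_logb (zero_lt_one.trans_le ha) (zero_lt_one.trans hb) hb.ne']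
  exact Real.rpow_le_rpow (by positivity) hx (Real.logb_nonneg hb ha)

lemma rpow_logb_le_pow {a b x : ℝ} (ha : 1 ≤ a) (hb : 1 < b) (hx₀ : 0 ≤ x) {n : ℕ}
    (hx : x ≤ b ^ n) : x ^ Real.logb b a ≤ a ^ n := by
  rw [← pow_rpow_logb (zero_lt_one.trans_le ha) (zero_lt_one.trans hb) hb.ne']
  exact Real.rpow_le_rpow hx₀ hx (Real.logb_nonneg hb ha)

lemma mul_rpow_le_hitCount {k t : ℕ} (hk : 0 < k) (ht : k ≤ t) :
    (k / 2 : ℝ) * (t / k : ℝ) ^ Real.logb 3 2 ≤ hitCount k t := by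
  have hk' : (0 : ℝ) < k := Nat.cast_pos.2 hk
  have hx : (1 : ℝ) ≤ t / k := (one_le_div hk').2 (Nat.cast_le.2 ht)
  obtain ⟨n, hn, hn'⟩ := exists_nat_pow_near hx (by norm_num : (1 : ℝ) < 3)
  have htime : 3 ^ n * k ≤ t := by exact_mod_cast (le_div_iff₀ hk').1 hn
  have hpow := rpow_logb_le_pow one_le_two (by norm_num) (by positivity) hn'.le
  calc (k / 2 : ℝ) * (t / k : ℝ) ^ Real.logb 3 2
      ≤ k / 2 * 2 ^ (n + 1) := by gcongr
    _ = (2 ^ n * k : ℕ) := by push_cast; ring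
    _ ≤ hitCount k t := Nat.cast_le.2 (two_pow_mul_le_hitCount hk htime)

lemma hitCount_le_mul_rpow {k t : ℕ} (hk : 1 < k) (ht : k - 1 ≤ t) :
    (hitCount k t : ℝ) ≤ 2 * k * (t / (k - 1) : ℝ) ^ Real.logb 3 2 := by
  have hk₀ : 0 < k := zero_lt_one.trans hk
  rw [← Nat.cast_pred hk₀]
  have hk' : (0 : ℝ) < (k - 1 : ℕ) := Nat.cast_pos.2 (Nat.sub_pos_of_lt hk)
  have hx : (1 : ℝ) ≤ t / (k - 1 : ℕ) := (one_le_div hk').2 (Nat.cast_le.2 ht)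
  obtain ⟨n, hn, hn'⟩ := exists_nat_pow_near hx (by norm_num : (1 : ℝ) < 3)
  have htime : t ≤ 3 ^ (n + 1) * (k - 1) := by exact_mod_cast ((div_lt_iff₀ hk').1 hn').le
  have hpow := pow_le_rpow_logb one_le_two (by norm_num) hn
  calc (hitCount k t : ℝ)
      ≤ (2 ^ (n + 1) * k : ℕ) := Nat.cast_le.2 (hitCount_le_two_pow_mul hk₀ htime)
    _ = 2 * k * 2 ^ n := by push_cast; ring
    _ ≤ 2 * k * (t / (k - 1 : ℕ) : ℝ) ^ Real.logb 3 2 := by gcongr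

theorem power_law_for_xor (xs : ℕ → ℤ) (h0 : xs 0 = 0)
    (hrec : ∀ t : ℕ, xs (t + 1) = if xevol double t (xs t) = 1 then xs t else xs t + 1) :
    ∃ c1 c2 : ℝ, ∃ T : ℕ, 0 < c1 ∧ c1 ≤ c2 ∧ ∀ t : ℕ, T ≤ t →
      c1 * (t : ℝ) ^ (Real.log 2 / Real.log 3) ≤ (t : ℝ) - (xs t : ℝ) ∧
      (t : ℝ) - (xs t : ℝ) ≤ c2 * (t : ℝ) ^ (Real.log 2 / Real.log 3) := by
  have hα : 0 ≤ Real.logb 3 2 := Real.logb_nonneg (by norm_num) (by norm_num)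
  have hcount (t : ℕ) : (t : ℝ) - xs t = hitCount 2 t := by
    rw [path_eq_sub_hitCount h0 hrec]
    push_cast
    ring
  simp only [Real.log_div_log, hcount]
  refine ⟨(2 ^ Real.logb 3 2)⁻¹, 4, 2, by positivity, ?_, fun t ht => ⟨?_, ?_⟩⟩
  · exact (inv_le_one_of_one_le₀ (Real.one_le_rpow one_le_two hα)).trans (by norm_num)
  · have hlower := mul_rpow_le_hitCount two_pos ht
    rw [Real.div_rpow (by positivity) (by positivity)] at hlower
    simpa [div_eq_inv_mul] using hlower
  · convert hitCount_le_mul_rpow one_lt_two (Nat.le_of_succ_le ht) using 2 <;> norm_num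
end
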